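/- arXiv:1006.4696 — 2 statements merged into one kernel-verified Lean document; each statement's English description precedes it below -/
import Mathlib

section
/- (Tightness, highest equilibrium direction) A competitive equilibrium W of a unit-demand market is the highest competitive equilibrium (maximal price vector) if and only if for every nonempty subset S of buyers all of whose payoffs at W are strictly positive, the demand set D_S(W) = {j ∈ J : ∃ i ∈ S with u_i^j(p^j(W)) = u_i(W)} has cardinality at least |S| + 1. -/
attribute [local instance] Classical.propDecidable

/-- A unit-demand market: finite sets of buyers `I` and goods `J`, with utility
functions `u i j : ℝ → ℝ` that are continuous, strictly decreasing, surjective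
(domain and range cover all of `ℝ`), and eventually non-positive. -/
structure Market (I J : Type) [Fintype I] [Fintype J] where
  u : I → J → ℝ → ℝ
  cont : ∀ i j, Continuous (u i j)
  anti : ∀ i j, StrictAnti (u i j)
  surj : ∀ i j, Function.Surjective (u i j)
  evNonpos : ∀ i j, ∃ x : ℝ, ∀ y ≥ x, u i j y ≤ 0

/-- A competitive equilibrium: nonnegative prices `p`, nonnegative payoffs `w`,
and a partial matching `μ` (injective on matched buyers) such that every buyer
receives a most preferred good at the prices, unmatched buyers have payoff `0`,
and unmatched goods have price `0`. -/
def IsEquilib {I J : Type} [Fintype I] [Fintype J] (M : Market I J)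
    (p : J → ℝ) (w : I → ℝ) (μ : I → Option J) : Prop :=
  (∀ i i' j, μ i = some j → μ i' = some j → i = i') ∧
  (∀ j, 0 ≤ p j) ∧ (∀ i, 0 ≤ w i) ∧
  (∀ i j, μ i = some j → w i = M.u i j (p j)) ∧
  (∀ i j, M.u i j (p j) ≤ w i) ∧
  (∀ i, μ i = none → w i = 0) ∧
  (∀ j, (∀ i, μ i ≠ some j) → p j = 0)

/-- `W` is the lowest competitive equilibrium: its prices are componentwise
below those of every competitive equilibrium. -/
def IsLowest {I J : Type} [Fintype I] [Fintype J] (M : Market I J)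
    (p : J → ℝ) (w : I → ℝ) (μ : I → Option J) : Prop :=
  IsEquilib M p w μ ∧ ∀ p' w' μ', IsEquilib M p' w' μ' → ∀ j, p j ≤ p' j

/-- `W` is the highest competitive equilibrium: its prices are componentwise
above those of every competitive equilibrium. -/
def IsHighest {I J : Type} [Fintype I] [Fintype J] (M : Market I J)
    (p : J → ℝ) (w : I → ℝ) (μ : I → Option J) : Prop :=
  IsEquilib M p w μ ∧ ∀ p' w' μ', IsEquilib M p' w' μ' → ∀ j, p' j ≤ p j

/-- Induced payoff `u_i(p) = max({u_i^j(p^j) : j} ∪ {0})`. -/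
noncomputable def inducedPayoff {I J : Type} [Fintype I] [Fintype J] (M : Market I J)
    (p : J → ℝ) (i : I) : ℝ :=
  (insert (0:ℝ) (Finset.univ.image fun j => M.u i j (p j))).max' (Finset.insert_nonempty _ _)

/-- Induced price `p^j(u) = max({p_i^j(u_i) : i} ∪ {0})`, where `p_i^j` is the
inverse of `u_i^j`. -/
noncomputable def inducedPrice {I J : Type} [Fintype I] [Fintype J] (M : Market I J)
    (w : I → ℝ) (j : J) : ℝ :=
  (insert (0:ℝ) (Finset.univ.image fun i => Function.invFun (M.u i j) (w i))).max' (Finset.insert_nonempty _ _)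

/-- The part of `IsApproxEquilib` that is preserved while the auction is running: buyers in `T`
hold goods in `D` at prices `q` above the reserve prices `r`, weakly prefer what they hold to their
outside option `o` and to every good at the next price `q k + δ`, and unsold goods stay at their
reserve price. -/
structure IsAuctionState {I J : Type} [Fintype I] [Fintype J] (M : Market I J) (T : Finset I)
    (D : Finset J) (o : I → ℝ) (r : J → ℝ) (δ : ℝ) (q : J → ℝ) (ν : I → Option J) : Prop where
  mem_buyers : ∀ i j, ν i = some j → i ∈ T
  mem_goods : ∀ i j, ν i = some j → j ∈ D
  inj : ∀ i i' j, ν i = some j → ν i' = some j → i = i'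
  reserve_le : ∀ j, r j ≤ q j
  unsold : ∀ j, (∀ i, ν i ≠ some j) → q j = r j
  outside_le : ∀ i j, ν i = some j → o i ≤ M.u i j (q j)
  next_le : ∀ i j, ν i = some j → ∀ k ∈ D, M.u i k (q k + δ) ≤ M.u i j (q j)

/-- An equilibrium, up to the price increment `δ`, of the market restricted to the buyers `T` and
the goods `D`, with outside options `o` and reserve prices `r`. -/
structure IsApproxEquilib {I J : Type} [Fintype I] [Fintype J] (M : Market I J) (T : Finset I)
    (D : Finset J) (o : I → ℝ) (r : J → ℝ) (δ : ℝ) (q : J → ℝ) (ν : I → Option J) : Prop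
    extends IsAuctionState M T D o r δ q ν where
  unmatched_le : ∀ i ∈ T, ν i = none → ∀ k ∈ D, M.u i k (q k + δ) ≤ o i

/-- If some unmatched buyer is willing to bid, the auction can be continued by one bid. -/
lemma IsAuctionState.exists_bid {I J : Type} [Fintype I] [Fintype J] {M : Market I J}
    {T : Finset I} {D : Finset J} {o : I → ℝ} {r : J → ℝ} {δ : ℝ} (hδ : 0 < δ) {n : J → ℕ}
    {ν : I → Option J} (h : IsAuctionState M T D o r δ (fun j => r j + n j * δ) ν)
    (hne : ¬ IsApproxEquilib M T D o r δ (fun j => r j + n j * δ) ν) :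
    ∃ (n' : J → ℕ) (ν' : I → Option J), ∑ j, n' j = ∑ j, n j + 1 ∧
      IsAuctionState M T D o r δ (fun j => r j + n' j * δ) ν' := by
  obtain ⟨i, hiT, hi, l, hl, hol⟩ : ∃ i ∈ T, ν i = none ∧ ∃ k ∈ D,
      o i < M.u i k (r k + n k * δ + δ) := by
    by_contra! hc
    exact hne ⟨h, hc⟩
  obtain ⟨k, hk, hmax⟩ := D.exists_max_image (fun k => M.u i k (r k + n k * δ + δ)) ⟨l, hl⟩
  have hnk : ∀ j, (n j : ℝ) * δ ≤ (Function.update n k (n k + 1) j : ℕ) * δ := by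
    intro j
    rcases eq_or_ne j k with rfl | hjk
    · simp only [Function.update_self, Nat.cast_add, Nat.cast_one]
      nlinarith
    · simp [hjk]
  have hmono : ∀ i' j, M.u i' j (r j + (Function.update n k (n k + 1) j : ℕ) * δ + δ) ≤
      M.u i' j (r j + n j * δ + δ) := fun i' j =>
    (M.anti i' j).antitone (by linarith [hnk j])
  refine ⟨Function.update n k (n k + 1),
    fun i' => if i' = i then some k else if ν i' = some k then none else ν i', ?_, ?_⟩
  · rw [Finset.sum_update_of_mem (Finset.mem_univ k),
      ← Finset.add_sum_erase Finset.univ n (Finset.mem_univ k), Finset.sdiff_singleton_eq_erase]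
    ring
  have key : ∀ i' j,
      (if i' = i then some k else if ν i' = some k then none else ν i') = some j →
        (i' = i ∧ j = k) ∨ (i' ≠ i ∧ j ≠ k ∧ ν i' = some j) := by
    intro i' j
    split_ifs <;> grind
  have hbid : r k + (Function.update n k (n k + 1) k : ℕ) * δ = r k + n k * δ + δ := by
    simp only [Function.update_self, Nat.cast_add, Nat.cast_one]
    ring
  have hprice : ∀ j, j ≠ k → r j + (Function.update n k (n k + 1) j : ℕ) * δ = r j + n j * δ := by
    intro j hj
    simp [hj]
  constructor
  · intro i' j hj
    rcases key i' j hj with ⟨rfl, rfl⟩ | ⟨-, -, hν'⟩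
    exacts [hiT, h.mem_buyers i' j hν']
  · intro i' j hj
    rcases key i' j hj with ⟨rfl, rfl⟩ | ⟨-, -, hν'⟩
    exacts [hk, h.mem_goods i' j hν']
  · intro i₁ i₂ j h₁ h₂
    have := h.inj i₁ i₂ j
    have c₁ := key i₁ j h₁
    have c₂ := key i₂ j h₂
    grind
  · intro j
    exact (h.reserve_le j).trans (by linarith [hnk j])
  · intro j hj
    have hjk : j ≠ k := by
      rintro rfl
      exact hj i (by simp)
    rw [hprice j hjk]
    refine h.unsold j fun i' hi' => hj i' ?_
    have h₁ : i' ≠ i := by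
      rintro rfl
      simp [hi] at hi'
    simp [h₁, hi', hjk]
  · intro i' j hj
    rcases key i' j hj with ⟨rfl, rfl⟩ | ⟨-, hjk, hν'⟩
    · rw [hbid]
      exact hol.le.trans (hmax l hl)
    · rw [hprice j hjk]
      exact h.outside_le i' j hν'
  · intro i' j hj m hm
    refine (hmono i' m).trans ?_
    rcases key i' j hj with ⟨rfl, rfl⟩ | ⟨-, hjk, hν'⟩
    · rw [hbid]
      exact hmax m hm
    · rw [hprice j hjk]
      exact h.next_le _ _ hν' _ hm

/-- The auction with increment `δ > 0` terminates in an approximate equilibrium. -/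
lemma exists_isApproxEquilib {I J : Type} [Fintype I] [Fintype J] (M : Market I J)
    (T : Finset I) (D : Finset J) (o : I → ℝ) (r : J → ℝ) {δ : ℝ} (hδ : 0 < δ) :
    ∃ q ν, IsApproxEquilib M T D o r δ q ν := by
  by_contra! hc
  have step : ∀ N : ℕ, ∃ (n : J → ℕ) (ν : I → Option J), ∑ j, n j = N ∧
      IsAuctionState M T D o r δ (fun j => r j + n j * δ) ν := by
    intro N
    induction N with
    | zero => exact ⟨fun _ => 0, fun _ => none, by simp, by constructor <;> simp⟩
    | succ N ih =>
      obtain ⟨n, ν, rfl, h⟩ := ih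
      exact h.exists_bid hδ (hc _ _)
  choose b hb using fun i j => M.surj i j (o i)
  have hB : ∀ j, ∃ B : ℕ, ∀ i, b i j - r j ≤ B * δ := by
    intro j
    obtain ⟨C, hC⟩ := (Set.finite_range fun i => b i j - r j).bddAbove
    obtain ⟨B, hB⟩ := exists_nat_ge (C / δ)
    exact ⟨B, fun i => (hC ⟨i, rfl⟩).trans ((div_le_iff₀ hδ).1 hB)⟩
  choose B hB using hB
  obtain ⟨n, ν, hn, h⟩ := step (∑ j, B j + 1)
  have hle : ∀ j, n j ≤ B j := by
    intro j
    by_cases hs : ∃ i, ν i = some j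
    · obtain ⟨i, hi⟩ := hs
      have h₁ := h.outside_le i j hi
      rw [← hb i j, (M.anti i j).le_iff_ge] at h₁
      have h₂ : (n j : ℝ) * δ ≤ B j * δ := by linarith [hB j i]
      exact_mod_cast le_of_mul_le_mul_right h₂ hδ
    · have h₁ := h.unsold j (by simpa using hs)
      have h₂ : (n j : ℝ) = 0 := by simpa [hδ.ne'] using h₁
      have h₃ : n j = 0 := by exact_mod_cast h₂
      omega
  have := Finset.sum_le_sum fun j (_ : j ∈ Finset.univ) => hle j
  omega

/-- Limits of approximate equilibria along an ultrafilter are equilibria, for an allocation that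
is attained frequently. -/
lemma exists_limit_isApproxEquilib {I J : Type} [Fintype I] [Fintype J] (M : Market I J)
    (T : Finset I) (D : Finset J) (o : I → ℝ) {α : Type} (U : Ultrafilter α) {r : α → J → ℝ}
    {r₀ : J → ℝ} (hr : ∀ j, Filter.Tendsto (fun a => r a j) U (nhds (r₀ j))) {δ : α → ℝ}
    (hδ : Filter.Tendsto δ U (nhds 0)) {q : α → J → ℝ} {ν : α → I → Option J}
    (h : ∀ a, IsApproxEquilib M T D o (r a) (δ a) (q a) (ν a)) :
    ∃ q₀ ν₀, (∀ᶠ a in (U : Filter α), ν a = ν₀) ∧ IsApproxEquilib M T D o r₀ 0 q₀ ν₀ := by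
  obtain ⟨ν₀, hν₀⟩ := (U.map ν).eq_pure_of_finite
  have hν : ∀ᶠ a in (U : Filter α), ν a = ν₀ := by
    have : {ν₀} ∈ U.map ν := by rw [hν₀]; exact Ultrafilter.mem_pure.2 rfl
    exact this
  choose b hb using fun i j => M.surj i j (o i)
  have hlim : ∀ j, ∃ x, Filter.Tendsto (fun a => q a j) U (nhds x) := by
    intro j
    obtain ⟨C, hC⟩ := (Set.finite_range fun i => b i j).bddAbove
    have hmem : ∀ᶠ a in (U : Filter α), q a j ∈ Set.Icc (r₀ j - 1) (max C (r₀ j + 1)) := by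
      filter_upwards [(hr j).eventually (lt_mem_nhds (sub_one_lt (r₀ j))),
        (hr j).eventually (gt_mem_nhds (lt_add_one (r₀ j)))] with a h₁ h₂
      refine ⟨h₁.le.trans ((h a).reserve_le j), ?_⟩
      by_cases hs : ∃ i, ν a i = some j
      · obtain ⟨i, hi⟩ := hs
        have h₃ := (h a).outside_le i j hi
        rw [← hb i j, (M.anti i j).le_iff_ge] at h₃
        exact le_max_of_le_left (h₃.trans (hC ⟨i, rfl⟩))
      · rw [(h a).unsold j (by simpa using hs)]
        exact le_max_of_le_right h₂.le
    obtain ⟨x, -, hx⟩ := isCompact_Icc.ultrafilter_le_nhds' (U.map fun a => q a j) hmem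
    exact ⟨x, hx⟩
  choose q₀ hq using hlim
  have hu : ∀ i j, Filter.Tendsto (fun a => M.u i j (q a j)) U (nhds (M.u i j (q₀ j))) :=
    fun i j => ((M.cont i j).tendsto _).comp (hq j)
  have hu' : ∀ i j, Filter.Tendsto (fun a => M.u i j (q a j + δ a)) U
      (nhds (M.u i j (q₀ j + 0))) :=
    fun i j => ((M.cont i j).tendsto _).comp ((hq j).add hδ)
  obtain ⟨a₀, rfl⟩ := hν.exists
  refine ⟨q₀, ν a₀, hν, ⟨(h a₀).mem_buyers, (h a₀).mem_goods, (h a₀).inj, ?_, ?_, ?_, ?_⟩, ?_⟩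
  · exact fun j => le_of_tendsto_of_tendsto' (hr j) (hq j) fun a => (h a).reserve_le j
  · intro j hj
    refine tendsto_nhds_unique_of_eventuallyEq (hq j) (hr j) ?_
    filter_upwards [hν] with a ha
    exact (h a).unsold j (by rwa [ha])
  · intro i j hj
    refine ge_of_tendsto (hu i j) ?_
    filter_upwards [hν] with a ha
    exact (h a).outside_le i j (by rwa [ha])
  · intro i j hj k hk
    refine le_of_tendsto_of_tendsto (hu' i k) (hu i j) ?_
    filter_upwards [hν] with a ha
    exact (h a).next_le i j (by rwa [ha]) k hk
  · intro i hi hn k hk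
    refine le_of_tendsto (hu' i k) ?_
    filter_upwards [hν] with a ha
    exact (h a).unmatched_le i hi (by rwa [ha]) k hk

/-- Restricted markets with outside options and reserve prices have equilibria. -/
lemma exists_isApproxEquilib_zero {I J : Type} [Fintype I] [Fintype J] (M : Market I J)
    (T : Finset I) (D : Finset J) (o : I → ℝ) (r : J → ℝ) :
    ∃ q ν, IsApproxEquilib M T D o r 0 q ν := by
  choose q ν h using fun n : ℕ =>
    exists_isApproxEquilib M T D o r (Nat.one_div_pos_of_nat (α := ℝ) (n := n))
  obtain ⟨q₀, ν₀, -, h₀⟩ := exists_limit_isApproxEquilib M T D o (Filter.hyperfilter ℕ)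
    (r := fun _ => r) (fun _ => tendsto_const_nhds)
    (tendsto_one_div_add_atTop_nhds_zero_nat.mono_left Nat.hyperfilter_le_atTop) h
  exact ⟨q₀, ν₀, h₀⟩

/-- The goods demanded by the buyers in `S` at prices `p` and payoffs `w`. -/
noncomputable def demandSet {I J : Type} [Fintype I] [Fintype J] (M : Market I J)
    (p : J → ℝ) (w : I → ℝ) (S : Finset I) : Finset J :=
  Finset.univ.filter fun j : J => ∃ i ∈ S, M.u i j (p j) = w i

lemma mem_demandSet {I J : Type} [Fintype I] [Fintype J] {M : Market I J} {p : J → ℝ}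
    {w : I → ℝ} {S : Finset I} {j : J} :
    j ∈ demandSet M p w S ↔ ∃ i ∈ S, M.u i j (p j) = w i := by
  simp [demandSet]

/-- If some price rises from `p` to `q`, and every good whose price rises is sold at `q` to a buyer
who prefers it to all goods demanded at `p`, then the buyers of these goods are worse off at `q` and
demand at `p` no more goods than there are such buyers. -/
lemma exists_card_demandSet_le {I J : Type} [Fintype I] [Fintype J] (M : Market I J)
    {p q : J → ℝ} {w : I → ℝ} {T : Finset I} {ν : I → Option J}
    (hw : ∀ i j, M.u i j (p j) ≤ w i)
    (hT : ∀ i j, ν i = some j → i ∈ T)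
    (hsold : ∀ j, p j < q j → ∃ i, ν i = some j)
    (hbest : ∀ i j, ν i = some j → ∀ k ∈ demandSet M p w T, M.u i k (q k) ≤ M.u i j (q j))
    (hup : ∃ j, p j < q j) :
    ∃ S : Finset I, S.Nonempty ∧
      (∀ i ∈ S, ∃ j, ν i = some j ∧ M.u i j (q j) < w i) ∧
      (demandSet M p w S).card ≤ S.card := by
  obtain ⟨j₀, hj₀⟩ := hup
  have : Nonempty I := ⟨(hsold j₀ hj₀).choose⟩
  choose! f hf using hsold
  have hlt : ∀ j, p j < q j → M.u (f j) j (q j) < w (f j) := fun j hj =>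
    (M.anti _ _ hj).trans_le (hw _ _)
  refine ⟨(Finset.univ.filter fun j => p j < q j).image f, ?_, ?_, ?_⟩
  · exact ⟨f j₀, Finset.mem_image_of_mem _ (by simpa using hj₀)⟩
  · intro i hi
    obtain ⟨j, hj, rfl⟩ := Finset.mem_image.1 hi
    replace hj : p j < q j := by simpa using hj
    exact ⟨j, hf j hj, hlt j hj⟩
  · rw [Finset.card_image_of_injOn]
    · refine Finset.card_le_card fun k hk => ?_
      obtain ⟨i, hi, hik⟩ := mem_demandSet.1 hk
      obtain ⟨j, hj, rfl⟩ := Finset.mem_image.1 hi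
      replace hj : p j < q j := by simpa using hj
      have hb := hbest (f j) j (hf j hj) k
        (mem_demandSet.2 ⟨f j, hT _ _ (hf j hj), hik⟩)
      have : M.u (f j) k (q k) < M.u (f j) k (p k) := by
        rw [hik]
        exact hb.trans_lt (hlt j hj)
      simpa using (M.anti _ _).lt_iff_gt.1 this
    · intro j hj j' hj' he
      have h₁ := hf j (by simpa using hj)
      have h₂ := hf j' (by simpa using hj')
      rw [he, h₂] at h₁
      simpa using h₁.symm

/-- Prices of the goods demanded by a tight set of buyers can be raised when these buyers can all
be matched to these goods, at higher prices, in an equilibrium of the restricted market. -/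
lemma IsEquilib.glue {I J : Type} [Fintype I] [Fintype J] [Nonempty J] {M : Market I J}
    {p : J → ℝ} {w : I → ℝ} {μ : I → Option J} (h : IsEquilib M p w μ) {T : Finset I}
    (hpos : ∀ i ∈ T, 0 < w i) (hcard : (demandSet M p w T).card ≤ T.card) {o : I → ℝ}
    (ho : ∀ i ∈ T, 0 ≤ o i)
    (hout : ∀ i ∈ T, ∀ j ∉ demandSet M p w T, M.u i j (p j) ≤ o i) {r q : J → ℝ}
    (hr : ∀ j, p j ≤ r j) {ν : I → Option J}
    (hq : IsApproxEquilib M T (demandSet M p w T) o r 0 q ν) (hall : ∀ i ∈ T, ν i ≠ none) :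
    ∃ p' w' μ', IsEquilib M p' w' μ' ∧ ∀ j ∈ demandSet M p w T, p' j = q j := by
  obtain ⟨hinj, hp, hw0, hwm, hwle, hun, hz⟩ := h
  set D := demandSet M p w T with hD
  have surj : ∀ κ : I → Option J, (∀ i i' j, κ i = some j → κ i' = some j → i = i') →
      (∀ i ∈ T, ∃ j ∈ D, κ i = some j) → ∀ j ∈ D, ∃ i ∈ T, κ i = some j := by
    intro κ hκ hm j hj
    choose! f hfD hf using hm
    obtain ⟨i, hi, hij⟩ := Finset.surj_on_of_inj_on_of_card_le (fun i (_ : i ∈ T) => f i) hfD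
      (fun i i' hi hi' he => hκ i i' (f i) (hf i hi) (by rw [hf i' hi', ← he])) hcard j hj
    exact ⟨i, hi, by rw [hf i hi, hij]⟩
  have hμT : ∀ i ∈ T, ∃ j ∈ D, μ i = some j := by
    intro i hi
    cases hm : μ i with
    | none => exact absurd (hun i hm) (hpos i hi).ne'
    | some j => exact ⟨j, mem_demandSet.2 ⟨i, hi, (hwm i j hm).symm⟩, rfl⟩
  have hμ := surj μ hinj hμT
  have hνT : ∀ i ∈ T, ∃ j ∈ D, ν i = some j := by
    intro i hi
    obtain ⟨j, hj⟩ := Option.ne_none_iff_exists'.1 (hall i hi)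
    exact ⟨j, hq.mem_goods i j hj, hj⟩
  have hν := surj ν hq.inj hνT
  have hμout : ∀ i ∉ T, ∀ j, μ i = some j → j ∉ D := by
    intro i hi j hij hj
    obtain ⟨i', hi', hij'⟩ := hμ j hj
    exact hi (hinj i i' j hij hij' ▸ hi')
  choose! g hgD hg using hνT
  refine ⟨fun j => if j ∈ D then q j else p j,
    fun i => if i ∈ T then M.u i (g i) (q (g i)) else w i,
    fun i => if i ∈ T then ν i else μ i, ⟨?_, ?_, ?_, ?_, ?_, ?_, ?_⟩, ?_⟩
  · intro i i' j h₁ h₂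
    have := hinj i i' j
    have := hq.inj i i' j
    have := hq.mem_goods i j
    have := hq.mem_goods i' j
    have := hμout i
    have := hμout i'
    grind
  · intro j
    have := hp j
    have := hr j
    have := hq.reserve_le j
    dsimp only
    split_ifs <;> linarith
  · intro i
    dsimp only
    split_ifs with hi
    · exact (ho i hi).trans (hq.outside_le i _ (hg i hi))
    · exact hw0 i
  · intro i j hij
    by_cases hi : i ∈ T
    · simp only [hi, if_true] at hij ⊢
      rw [hg i hi, Option.some.injEq] at hij
      subst hij
      simp [hgD i hi]
    · simp only [hi, if_false] at hij ⊢
      simp [hμout i hi j hij, hwm i j hij]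
  · intro i j
    by_cases hi : i ∈ T <;> by_cases hj : j ∈ D <;> simp only [hi, hj, if_true, if_false]
    · simpa using hq.next_le i _ (hg i hi) j hj
    · exact (hout i hi j hj).trans (hq.outside_le i _ (hg i hi))
    · exact ((M.anti i j).antitone ((hr j).trans (hq.reserve_le j))).trans (hwle i j)
    · exact hwle i j
  · intro i hi
    by_cases hiT : i ∈ T
    · simp only [hiT, if_true] at hi
      exact absurd hi (hall i hiT)
    · simp only [hiT, if_false] at hi ⊢
      exact hun i hi
  · intro j hj
    by_cases hjD : j ∈ D
    · obtain ⟨i, hi, hij⟩ := hν j hjD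
      exact absurd (by simpa [hi] using hij) (hj i)
    · simp only [hjD, if_false]
      refine hz j fun i hij => ?_
      by_cases hi : i ∈ T
      · obtain ⟨k, hk, hik⟩ := hμT i hi
        rw [hij, Option.some.injEq] at hik
        exact hjD (hik ▸ hk)
      · exact hj i (by simpa [hi] using hij)
  · intro j hj
    simp [hj]

/-- At an equilibrium with a tight set of buyers, some price can be raised. -/
lemma IsEquilib.exists_price_lt {I J : Type} [Fintype I] [Fintype J] {M : Market I J}
    {p : J → ℝ} {w : I → ℝ} {μ : I → Option J} (h : IsEquilib M p w μ) {S : Finset I}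
    (hne : S.Nonempty) (hpos : ∀ i ∈ S, 0 < w i) (hcard : (demandSet M p w S).card ≤ S.card) :
    ∃ p' w' μ', IsEquilib M p' w' μ' ∧ ∃ j, p j < p' j := by
  obtain ⟨T, hTmem, hmin⟩ := (Finset.univ.filter fun T : Finset I => T.Nonempty ∧
      (∀ i ∈ T, 0 < w i) ∧ (demandSet M p w T).card ≤ T.card).exists_min_image Finset.card
    ⟨S, by simp [hne, hcard]; exact hpos⟩
  simp only [Finset.mem_filter, Finset.mem_univ, true_and] at hTmem hmin
  obtain ⟨⟨t, ht⟩, hTpos, hTcard⟩ := hTmem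
  obtain ⟨hinj, hp, hw0, hwm, hwle, hun, hz⟩ := id h
  have hdem : ∀ i ∈ T, ∃ j ∈ demandSet M p w T, M.u i j (p j) = w i := by
    intro i hi
    cases hm : μ i with
    | none => exact absurd (hun i hm) (hTpos i hi).ne'
    | some j => exact ⟨j, mem_demandSet.2 ⟨i, hi, (hwm i j hm).symm⟩, (hwm i j hm).symm⟩
  have hout : ∀ i ∈ T, ∃ x, 0 ≤ x ∧ x < w i ∧
      ∀ j ∉ demandSet M p w T, M.u i j (p j) ≤ x := by
    intro i hi
    have h₁ : ∀ᶠ x in nhdsWithin (w i) (Set.Iio (w i)), ∀ j,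
        j ∉ demandSet M p w T → M.u i j (p j) < x := by
      refine Filter.eventually_all.2 fun j => ?_
      by_cases hj : j ∈ demandSet M p w T
      · simp [hj]
      · have hlt : M.u i j (p j) < w i :=
          (hwle i j).lt_of_ne fun he => hj (mem_demandSet.2 ⟨i, hi, he⟩)
        filter_upwards [nhdsWithin_le_nhds (lt_mem_nhds hlt)] with x hx _ using hx
    have h₂ : ∀ᶠ x in nhdsWithin (w i) (Set.Iio (w i)), 0 < x :=
      nhdsWithin_le_nhds (lt_mem_nhds (hTpos i hi))
    obtain ⟨x, ⟨hx₁, hx₂⟩, hx₃⟩ := ((h₁.and h₂).and self_mem_nhdsWithin).exists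
    exact ⟨x, hx₂.le, hx₃, fun j hj => (hx₁ j hj).le⟩
  choose! o ho hoT hoj using hout
  choose q ν hq using fun n : ℕ => exists_isApproxEquilib_zero M T (demandSet M p w T) o
    (fun j => p j + 1 / ((n : ℝ) + 1))
  obtain ⟨q₀, ν₀, hν₀, h₀⟩ := exists_limit_isApproxEquilib M T (demandSet M p w T) o
    (Filter.hyperfilter ℕ) (r₀ := p) (fun j => by
      simpa using (tendsto_const_nhds (x := p j)).add
        (tendsto_one_div_add_atTop_nhds_zero_nat.mono_left Nat.hyperfilter_le_atTop))
    tendsto_const_nhds hq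
  have hall : ∀ i ∈ T, ν₀ i ≠ none := by
    intro i hi hn
    obtain ⟨k, hk, hik⟩ := hdem i hi
    have hup : p k < q₀ k := by
      refine (M.anti i k).lt_iff_gt.1 ?_
      rw [hik]
      exact (by simpa using h₀.unmatched_le i hi hn k hk : M.u i k (q₀ k) ≤ o i).trans_lt
        (hoT i hi)
    obtain ⟨R, hRne, hR, hRcard⟩ := exists_card_demandSet_le M hwle h₀.mem_buyers
      (fun j hj => by
        by_contra! hc
        exact hj.ne' (h₀.unsold j hc))
      (fun i j hij k hk => by simpa using h₀.next_le i j hij k hk) ⟨k, hup⟩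
    have hRT : ∀ i' ∈ R, i' ∈ T := fun i' hi' =>
      let ⟨j, hj, _⟩ := hR i' hi'
      h₀.mem_buyers i' j hj
    have hle := hmin R ⟨hRne, fun i' hi' => hTpos i' (hRT i' hi'), hRcard⟩
    have hiR : i ∉ R := fun hi' => by
      obtain ⟨j, hj, _⟩ := hR i hi'
      simp [hn] at hj
    exact absurd hle (not_le.2 (Finset.card_lt_card ⟨hRT, fun hs => hiR (hs hi)⟩))
  obtain ⟨n, hn⟩ := hν₀.exists
  have hn0 : 0 < 1 / ((n : ℝ) + 1) := Nat.one_div_pos_of_nat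
  obtain ⟨k, hk, -⟩ := hdem t ht
  have : Nonempty J := ⟨k⟩
  obtain ⟨p', w', μ', h', hpq⟩ := h.glue hTpos hTcard ho hoj (fun j => by linarith) (hq n)
    (by rwa [hn])
  refine ⟨p', w', μ', h', k, ?_⟩
  rw [hpq k hk]
  linarith [(hq n).reserve_le k]

/-- Tightness (highest equilibrium): a competitive equilibrium `W` is the
highest one iff for every nonempty set `S` of buyers with strictly positive
payoffs, the buyers in `S` demand at least `|S| + 1` goods. -/
theorem tightness_highest {I J : Type} [Fintype I] [Fintype J] (M : Market I J)
    (p : J → ℝ) (w : I → ℝ) (μ : I → Option J) (h : IsEquilib M p w μ) :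
    IsHighest M p w μ ↔
      ∀ S : Finset I, S.Nonempty → (∀ i ∈ S, 0 < w i) →
        S.card + 1 ≤ (Finset.univ.filter fun j : J =>
          ∃ i ∈ S, M.u i j (p j) = w i).card := by
  constructor
  · rintro ⟨-, hmax⟩ S hne hpos
    by_contra! hc
    obtain ⟨p', w', μ', h', j, hj⟩ := h.exists_price_lt hne hpos (Nat.lt_succ_iff.1 hc)
    exact hj.not_ge (hmax p' w' μ' h' j)
  · refine fun hS => ⟨h, fun p' w' μ' h' j => ?_⟩
    by_contra! hj
    obtain ⟨-, hp, -, -, hwle, -, -⟩ := h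
    obtain ⟨hinj', hp', hw0', hwm', hwle', hun', hz'⟩ := h'
    obtain ⟨R, hRne, hR, hRcard⟩ := exists_card_demandSet_le M (T := Finset.univ) hwle
      (fun _ _ _ => Finset.mem_univ _)
      (fun k hk => by
        by_contra! hc
        linarith [hz' k hc, hp k])
      (fun i k hik l _ => hwm' i k hik ▸ hwle' i l) ⟨j, hj⟩
    have hpos : ∀ i ∈ R, 0 < w i := by
      intro i hi
      obtain ⟨k, hk, hlt⟩ := hR i hi
      rw [← hwm' i k hk] at hlt
      exact (hw0' i).trans_lt hlt
    exact absurd (hS R hRne hpos) (not_le.2 (Nat.lt_succ_of_le hRcard))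
end

section
/- (Price monotonicity under buyer removal) For any unit-demand market M, any buyer i, and any good j: the price of j at the lowest competitive equilibrium of M is at most the price of j at the highest competitive equilibrium of M_{-i} (the market without buyer i); moreover, if buyer i is matched to good j in the lowest competitive equilibrium of M, then these two prices are equal. -/
attribute [local instance] Classical.propDecidable

/-- The market with buyer `i0` removed. -/
def Market.removeBuyer {I J : Type} [Fintype I] [Fintype J] [DecidableEq I]
    (M : Market I J) (i0 : I) : Market {i : I // i ≠ i0} J where
  u := fun i j => M.u i.1 j
  cont := fun i j => M.cont i.1 j
  anti := fun i j => M.anti i.1 j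
  surj := fun i j => M.surj i.1 j
  evNonpos := fun i j => M.evNonpos i.1 j

/-- The market with good `j0` removed. -/
def Market.removeGood {I J : Type} [Fintype I] [Fintype J] [DecidableEq J]
    (M : Market I J) (j0 : J) : Market I {j : J // j ≠ j0} where
  u := fun i j => M.u i j.1
  cont := fun i j => M.cont i j.1
  anti := fun i j => M.anti i j.1
  surj := fun i j => M.surj i j.1
  evNonpos := fun i j => M.evNonpos i j.1

/-- A competitive equilibrium with reserve prices `r`: prices are at least `r`, and unmatched
goods are priced at their reserve. -/
def IsReserveEquilib {I J : Type} [Fintype I] [Fintype J] (M : Market I J) (r : J → ℝ)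
    (p : J → ℝ) (w : I → ℝ) (μ : I → Option J) : Prop :=
  (∀ i i' j, μ i = some j → μ i' = some j → i = i') ∧
  (∀ j, r j ≤ p j) ∧ (∀ i, 0 ≤ w i) ∧
  (∀ i j, μ i = some j → w i = M.u i j (p j)) ∧
  (∀ i j, M.u i j (p j) ≤ w i) ∧
  (∀ i, μ i = none → w i = 0) ∧
  (∀ j, (∀ i, μ i ≠ some j) → p j = r j)

/-- A state of the ascending auction with reserve prices `r` and bid increment `δ`, in which
good `j` has received `n j` bids. -/
def IsAuctionState_s11 {I J : Type} [Fintype I] [Fintype J] (M : Market I J) (r : J → ℝ) (δ : ℝ)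
    (n : J → ℕ) (μ : I → Option J) : Prop :=
  (∀ i i' j, μ i = some j → μ i' = some j → i = i') ∧
  (∀ j, (∀ i, μ i ≠ some j) → n j = 0) ∧
  (∀ i j, μ i = some j → 0 ≤ M.u i j (r j + n j * δ)) ∧
  (∀ i j k, μ i = some j → M.u i k (r k + n k * δ + δ) ≤ M.u i j (r j + n j * δ))

section Existence

variable {I J : Type} [Fintype I] [Fintype J]

/-- A buyer without a good who would gain from raising some price by `δ` can bid. -/
theorem IsAuctionState_s11.exists_bid {M : Market I J} {r : J → ℝ} {δ : ℝ} (hδ : 0 < δ)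
    {n : J → ℕ} {μ : I → Option J} (h : IsAuctionState_s11 M r δ n μ) {i : I} {k : J}
    (hi : μ i = none) (hk : 0 < M.u i k (r k + n k * δ + δ)) :
    ∃ n' μ', IsAuctionState_s11 M r δ n' μ' ∧ ∑ j, n' j = ∑ j, n j + 1 := by
  obtain ⟨hinj, hun, hpos, hbest⟩ := h
  have : Nonempty J := ⟨k⟩
  obtain ⟨l, hl⟩ := Finite.exists_max fun j => M.u i j (r j + n j * δ + δ)
  have hlpos : 0 < M.u i l (r l + n l * δ + δ) := hk.trans_le (hl k)
  let n' : J → ℕ := fun j => if j = l then n l + 1 else n j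
  let μ' : I → Option J := fun a => if a = i then some l else if μ a = some l then none else μ a
  have hn'l : r l + (n' l : ℝ) * δ = r l + n l * δ + δ := by
    simp only [n', if_true]; push_cast; ring
  have hn' : ∀ j, j ≠ l → n' j = n j := fun j hj => by simp [n', hj]
  have hmono : ∀ j, r j + (n j : ℝ) * δ ≤ r j + n' j * δ := by
    intro j
    by_cases hj : j = l
    · subst hj; linarith
    · rw [hn' j hj]
  have hμi : μ' i = some l := by simp [μ']
  have hμ' : ∀ a j, μ' a = some j → (a = i ∧ j = l) ∨ (a ≠ i ∧ j ≠ l ∧ μ a = some j) := by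
    intro a j ha
    by_cases hai : a = i
    · simp only [μ', hai, if_true, Option.some.injEq] at ha
      exact Or.inl ⟨hai, ha.symm⟩
    · by_cases hal : μ a = some l
      · simp [μ', hai, hal] at ha
      · simp only [μ', hai, hal, if_false] at ha
        exact Or.inr ⟨hai, fun e => hal (e ▸ ha), ha⟩
  refine ⟨n', μ', ⟨?_, ?_, ?_, ?_⟩, ?_⟩
  · intro a b j ha hb
    rcases hμ' a j ha with ⟨rfl, rfl⟩ | ⟨_, hj, ha'⟩ <;>
      rcases hμ' b j hb with ⟨rfl, hj'⟩ | ⟨_, hj', hb'⟩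
    · rfl
    · exact absurd rfl hj'
    · exact absurd hj' hj
    · exact hinj a b j ha' hb'
  · intro j hj
    have hjl : j ≠ l := fun e => hj i (e ▸ hμi)
    rw [hn' j hjl]
    refine hun j fun a ha => hj a ?_
    have hai : a ≠ i := by rintro rfl; simp [hi] at ha
    simp [μ', hai, ha, hjl]
  · intro a j ha
    rcases hμ' a j ha with ⟨rfl, rfl⟩ | ⟨_, hj, ha'⟩
    · rw [hn'l]; exact hlpos.le
    · rw [hn' j hj]; exact hpos a j ha'
  · intro a j m ha
    have hm : M.u a m (r m + n' m * δ + δ) ≤ M.u a m (r m + n m * δ + δ) :=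
      (M.anti a m).antitone (by linarith [hmono m])
    rcases hμ' a j ha with ⟨rfl, rfl⟩ | ⟨_, hj, ha'⟩
    · rw [hn'l]; exact hm.trans (hl m)
    · rw [hn' j hj]; exact hm.trans (hbest a j m ha')
  · have hsum : ∀ j, n' j = n j + if j = l then 1 else 0 := by
      intro j
      by_cases hj : j = l <;> simp [n', hj]
    simp [hsum, Finset.sum_add_distrib]

/-- Prices at which some buyer gets a nonnegative payoff are bounded. -/
theorem Market.exists_price_bound (M : Market I J) (r : J → ℝ) :
    ∃ B : ℝ, (∀ j, r j ≤ B) ∧ ∀ i j x, 0 ≤ M.u i j x → x ≤ B := by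
  choose X hX using fun ij : I × J => M.surj ij.1 ij.2 (-1)
  obtain ⟨B₁, h₁⟩ := (Set.finite_range X).bddAbove
  obtain ⟨B₂, h₂⟩ := (Set.finite_range r).bddAbove
  refine ⟨max B₁ B₂, fun j => le_max_of_le_right (h₂ ⟨j, rfl⟩), fun i j x hx => ?_⟩
  refine le_max_of_le_left (le_trans ?_ (h₁ ⟨(i, j), rfl⟩))
  refine ((M.anti i j).lt_iff_gt.1 ?_).le
  have := hX (i, j)
  simp only at this
  linarith

/-- The ascending auction terminates. -/
theorem Market.exists_final_auctionState (M : Market I J) (r : J → ℝ) {δ : ℝ} (hδ : 0 < δ) :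
    ∃ n μ, IsAuctionState_s11 M r δ n μ ∧
      ∀ i k, μ i = none → M.u i k (r k + n k * δ + δ) ≤ 0 := by
  by_contra! hcon
  have hlarge : ∀ m : ℕ, ∃ n μ, IsAuctionState_s11 M r δ n μ ∧ ∑ j, n j = m := by
    intro m
    induction m with
    | zero => exact ⟨fun _ => 0, fun _ => none, by simp [IsAuctionState_s11], by simp⟩
    | succ m ih =>
      obtain ⟨n, μ, h, hm⟩ := ih
      obtain ⟨i, k, hi, hk⟩ := hcon n μ h
      obtain ⟨n', μ', h', hs⟩ := h.exists_bid hδ hi hk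
      exact ⟨n', μ', h', by rw [hs, hm]⟩
  obtain ⟨B, -, hB⟩ := M.exists_price_bound r
  have hbound : ∀ j, ∃ N : ℕ, (B - r j) / δ ≤ N := fun j => exists_nat_ge _
  choose N hN using hbound
  obtain ⟨n, μ, ⟨-, hun, hpos, -⟩, hm⟩ := hlarge (∑ j, N j + 1)
  have hle : ∀ j, n j ≤ N j := by
    intro j
    by_cases hj : ∀ i, μ i ≠ some j
    · simp [hun j hj]
    · push Not at hj
      obtain ⟨i, hi⟩ := hj
      have h1 := hB i j _ (hpos i j hi)
      have h2 : (n j : ℝ) ≤ (B - r j) / δ := by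
        rw [le_div_iff₀ hδ]; linarith
      exact_mod_cast h2.trans (hN j)
  have := Finset.sum_le_sum fun j (_ : j ∈ Finset.univ) => hle j
  omega

/-- Approximate equilibria with reserve prices exist, within uniformly bounded prices. -/
theorem Market.exists_approx_equilib (M : Market I J) (r : J → ℝ) {B : ℝ}
    (hr : ∀ j, r j ≤ B) (hB : ∀ i j x, 0 ≤ M.u i j x → x ≤ B) {δ : ℝ} (hδ : 0 < δ) :
    ∃ q : J → ℝ, ∃ μ : I → Option J, q ∈ Set.Icc r (fun _ => B) ∧
      (∀ i i' j, μ i = some j → μ i' = some j → i = i') ∧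
      (∀ j, (∀ i, μ i ≠ some j) → q j = r j) ∧
      (∀ i j, μ i = some j → 0 ≤ M.u i j (q j)) ∧
      (∀ i j k, μ i = some j → M.u i k (q k + δ) ≤ M.u i j (q j)) ∧
      ∀ i k, μ i = none → M.u i k (q k + δ) ≤ 0 := by
  obtain ⟨n, μ, ⟨hinj, hun, hpos, hbest⟩, hfin⟩ := M.exists_final_auctionState r hδ
  have hq : ∀ j, (∀ i, μ i ≠ some j) → r j + n j * δ = r j := fun j hj => by simp [hun j hj]
  refine ⟨fun j => r j + n j * δ, μ, ⟨fun j => ?_, fun j => ?_⟩, hinj, hq, hpos, hbest, hfin⟩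
  · have : 0 ≤ (n j : ℝ) * δ := by positivity
    simp only
    linarith
  · by_cases hj : ∀ i, μ i ≠ some j
    · simp only [hq j hj]; exact hr j
    · push Not at hj
      obtain ⟨i, hi⟩ := hj
      exact hB i j _ (hpos i j hi)

/-- Every market has an equilibrium for any reserve prices. -/
theorem Market.exists_reserveEquilib (M : Market I J) (r : J → ℝ) :
    ∃ p w μ, IsReserveEquilib M r p w μ := by
  obtain ⟨B, hr, hB⟩ := M.exists_price_bound r
  choose q μ hbox hinj hun hpos hbest hfin using fun m : ℕ =>
    M.exists_approx_equilib r hr hB (δ := 1 / ((m : ℝ) + 1)) (by positivity)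
  let F : Ultrafilter ℕ := Filter.hyperfilter ℕ
  obtain ⟨p, hp, hlim⟩ : ∃ p ∈ Set.Icc r (fun _ => B), Filter.Tendsto q F (nhds p) := by
    refine isCompact_Icc.ultrafilter_le_nhds (F.map q) ?_
    exact Filter.le_principal_iff.2
      (Filter.Eventually.of_forall hbox : ∀ᶠ m in (F : Filter ℕ), q m ∈ Set.Icc r fun _ => B)
  obtain ⟨ν, hν⟩ := (F.map μ).eq_pure_of_finite
  have hev : ∀ᶠ m in (F : Filter ℕ), μ m = ν := by
    have : ({ν} : Set (I → Option J)) ∈ F.map μ := by rw [hν]; exact Filter.mem_pure.2 rfl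
    exact this
  have hlimj : ∀ j, Filter.Tendsto (fun m => q m j) F (nhds (p j)) := tendsto_pi_nhds.1 hlim
  have hδ : Filter.Tendsto (fun m : ℕ => 1 / ((m : ℝ) + 1)) F (nhds 0) :=
    tendsto_one_div_add_atTop_nhds_zero_nat.mono_left Nat.hyperfilter_le_atTop
  have hu : ∀ i j, Filter.Tendsto (fun m => M.u i j (q m j)) F (nhds (M.u i j (p j))) :=
    fun i j => ((M.cont i j).tendsto _).comp (hlimj j)
  have huδ : ∀ i j, Filter.Tendsto (fun m : ℕ => M.u i j (q m j + 1 / ((m : ℝ) + 1))) F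
      (nhds (M.u i j (p j))) := fun i j =>
    ((M.cont i j).tendsto _).comp (by simpa using (hlimj j).add hδ)
  have hmatch : ∀ i j, ν i = some j →
      0 ≤ M.u i j (p j) ∧ ∀ k, M.u i k (p k) ≤ M.u i j (p j) := by
    intro i j hij
    refine ⟨ge_of_tendsto (hu i j) ?_, fun k => le_of_tendsto_of_tendsto (huδ i k) (hu i j) ?_⟩
    · filter_upwards [hev] with m hm using hpos m i j (hm ▸ hij)
    · filter_upwards [hev] with m hm using hbest m i j k (hm ▸ hij)
  have hnone : ∀ i k, ν i = none → M.u i k (p k) ≤ 0 := by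
    intro i k hi
    refine le_of_tendsto (huδ i k) ?_
    filter_upwards [hev] with m hm using hfin m i k (hm ▸ hi)
  let w : I → ℝ := fun i => (ν i).elim 0 fun j => M.u i j (p j)
  have hws : ∀ i j, ν i = some j → w i = M.u i j (p j) := fun i j h => by simp [w, h]
  have hwn : ∀ i, ν i = none → w i = 0 := fun i h => by simp [w, h]
  refine ⟨p, w, ν, ?_, hp.1, ?_, hws, ?_, hwn, ?_⟩
  · obtain ⟨m, hm⟩ := hev.exists
    exact hm ▸ hinj m
  · intro i
    rcases h : ν i with _ | j
    · rw [hwn i h]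
    · rw [hws i j h]; exact (hmatch i j h).1
  · intro i k
    rcases h : ν i with _ | j
    · rw [hwn i h]; exact hnone i k h
    · rw [hws i j h]; exact (hmatch i j h).2 k
  · intro j hj
    refine tendsto_nhds_unique (hlimj j) (tendsto_const_nhds.congr' ?_)
    filter_upwards [hev] with m hm
    exact (hun m j (hm ▸ hj)).symm

end Existence

/-- A total, left-unique relation on a subset of a finite type is right-total. -/
theorem exists_preimage_of_leftUnique {J : Type} [Finite J] (A : Set J) (R : J → J → Prop)
    (htot : ∀ j ∈ A, ∃ k ∈ A, R j k) (huniq : ∀ j ∈ A, ∀ j' ∈ A, ∀ k, R j k → R j' k → j = j')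
    {k : J} (hk : k ∈ A) : ∃ j ∈ A, R j k := by
  choose f hfA hf using htot
  let g : A → A := fun j => ⟨f j j.2, hfA j j.2⟩
  have hg : Function.Injective g := by
    intro j j' h
    have h' : f j j.2 = f j' j'.2 := congrArg Subtype.val h
    exact Subtype.ext (huniq j j.2 j' j'.2 _ (hf j j.2) (h' ▸ hf j' j'.2))
  obtain ⟨j, hj⟩ := Finite.injective_iff_surjective.1 hg ⟨k, hk⟩
  have hjk : f j j.2 = k := congrArg Subtype.val hj
  exact ⟨j, j.2, hjk ▸ hf j j.2⟩

section Comparison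

variable {I J : Type} [Fintype I] [Fintype J] {M : Market I J} {r s p q : J → ℝ} {w v : I → ℝ}
  {μ ν : I → Option J}

/-- A buyer of a good that is cheaper in another equilibrium buys a cheaper good there. -/
theorem IsReserveEquilib.exists_match_of_lt (hp : IsReserveEquilib M r p w μ)
    (hq : IsReserveEquilib M s q v ν) {i : I} {j : J} (hij : μ i = some j) (hlt : q j < p j) :
    ∃ k, q k < p k ∧ ν i = some k := by
  obtain ⟨-, -, hw, hpm, hpb, -, -⟩ := hp
  obtain ⟨-, -, -, hqm, hqb, hqn, -⟩ := hq
  have h1 : w i < v i := by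
    rw [hpm i j hij]
    exact (M.anti i j hlt).trans_le (hqb i j)
  rcases h : ν i with _ | k
  · linarith [hqn i h, hw i]
  · refine ⟨k, (M.anti i k).lt_iff_gt.1 ?_, rfl⟩
    rw [← hqm i k h]
    exact (hpb i k).trans_lt h1

/-- If all goods cheaper in `q` are sold in `p`, their `p`-buyers purchase all of them in `q`. -/
theorem IsReserveEquilib.exists_common_buyer (hp : IsReserveEquilib M r p w μ)
    (hq : IsReserveEquilib M s q v ν) (hsold : ∀ j, q j < p j → ∃ i, μ i = some j)
    {k : J} (hk : q k < p k) : ∃ j, q j < p j ∧ ∃ i, μ i = some j ∧ ν i = some k := by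
  refine exists_preimage_of_leftUnique {j | q j < p j}
    (fun j k => ∃ i, μ i = some j ∧ ν i = some k) ?_ ?_ hk
  · intro j hj
    obtain ⟨i, hi⟩ := hsold j hj
    obtain ⟨k, hk, hik⟩ := hp.exists_match_of_lt hq hi hj
    exact ⟨k, hk, i, hi, hik⟩
  · rintro j - j' - k ⟨i, hij, hik⟩ ⟨i', hij', hik'⟩
    obtain rfl := hq.1 i i' k hik hik'
    exact Option.some_injective _ (hij.symm.trans hij')

/-- If at most one good cheaper in `q` is unsold in `p`, then at most one of them is unsold
in `q`. -/
theorem IsReserveEquilib.unsold_unique (hp : IsReserveEquilib M r p w μ)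
    (hq : IsReserveEquilib M s q v ν) {j₀ : J}
    (hsold : ∀ j, q j < p j → j ≠ j₀ → ∃ i, μ i = some j)
    {k₁ k₂ : J} (h₁ : q k₁ < p k₁) (h₂ : q k₂ < p k₂) (hk₁ : ∀ i, ν i ≠ some k₁)
    (hk₂ : ∀ i, ν i ≠ some k₂) : k₂ = k₁ := by
  obtain ⟨j, -, ⟨i, -, hi⟩ | ⟨-, h⟩⟩ := exists_preimage_of_leftUnique {j | q j < p j}
    (fun j k => (∃ i, μ i = some j ∧ ν i = some k) ∨ ((∀ i, μ i ≠ some j) ∧ k = k₁))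
    (k := k₂) (by
      intro j hj
      by_cases h : ∃ i, μ i = some j
      · obtain ⟨i, hi⟩ := h
        obtain ⟨k, hk, hik⟩ := hp.exists_match_of_lt hq hi hj
        exact ⟨k, hk, Or.inl ⟨i, hi, hik⟩⟩
      · push Not at h
        exact ⟨k₁, h₁, Or.inr ⟨h, rfl⟩⟩)
    (by
      rintro j hj j' hj' k (⟨i, hij, hik⟩ | ⟨hn, rfl⟩) (⟨i', hij', hik'⟩ | ⟨hn', hk⟩)
      · obtain rfl := hq.1 i i' k hik hik'
        exact Option.some_injective _ (hij.symm.trans hij')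
      · exact absurd (hk ▸ hik) (hk₁ i)
      · exact absurd hik' (hk₁ i')
      · have hj₀ : ∀ l, q l < p l → (∀ i, μ i ≠ some l) → l = j₀ := by
          intro l hl hnl
          by_contra hne
          obtain ⟨i, hi⟩ := hsold l hl hne
          exact hnl i hi
        rw [hj₀ j hj hn, hj₀ j' hj' hn']) h₂
  · exact absurd hi (hk₂ i)
  · exact h

/-- If every good that is dearer in `p` than in the highest equilibrium `q` is sold in `p`, then
there is no such good. -/
theorem IsHighest.le_of_sold (hq : IsHighest M q v ν) (hp : IsReserveEquilib M r p w μ)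
    (hsold : ∀ j, q j < p j → ∃ i, μ i = some j) (j : J) : p j ≤ q j := by
  have hq' : IsReserveEquilib M (fun _ => 0) q v ν := hq.1
  have hback : ∀ i k, q k < p k → ν i = some k → ∃ l, q l < p l ∧ μ i = some l := by
    intro i k hk hi
    obtain ⟨l, hl, i', hi', hk'⟩ := hp.exists_common_buyer hq' hsold hk
    obtain rfl := hq'.1 i i' k hi hk'
    exact ⟨l, hl, hi'⟩
  let T : I → Prop := fun i => ∃ l, q l < p l ∧ μ i = some l
  let v' : I → ℝ := fun i => if T i then w i else v i
  let ν' : I → Option J := fun i => if T i then μ i else ν i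
  obtain ⟨pinj, -, pw, pm, pb, pn, -⟩ := id hp
  obtain ⟨qinj, q0, qv, qm, qb, qn, qu⟩ := id hq'
  have hν' : ∀ i k, ν' i = some k → (T i ∧ q k < p k ∧ μ i = some k ∧ v' i = w i) ∨
      (¬ T i ∧ p k ≤ q k ∧ ν i = some k ∧ v' i = v i) := by
    intro i k hi
    by_cases h : T i
    · simp only [ν', h, if_true] at hi
      obtain ⟨l, hl, hil⟩ := id h
      obtain rfl : l = k := Option.some_injective _ (hil.symm.trans hi)
      exact Or.inl ⟨h, hl, hi, by simp [v', h]⟩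
    · simp only [ν', h, if_false] at hi
      refine Or.inr ⟨h, ?_, hi, by simp [v', h]⟩
      by_contra! hk
      exact h (hback i k hk hi)
  have key : IsEquilib M (fun j => max (p j) (q j)) v' ν' := by
    refine ⟨?_, fun j => le_max_of_le_right (q0 j), ?_, ?_, ?_, ?_, ?_⟩
    · intro i i' k hi hi'
      rcases hν' i k hi with ⟨-, hk, h, -⟩ | ⟨-, hk, h, -⟩ <;>
        rcases hν' i' k hi' with ⟨-, hk', h', -⟩ | ⟨-, hk', h', -⟩
      · exact pinj i i' k h h'
      · exact absurd hk' hk.not_ge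
      · exact absurd hk hk'.not_ge
      · exact qinj i i' k h h'
    · intro i
      by_cases h : T i
      · simpa [v', h] using pw i
      · simpa [v', h] using qv i
    · intro i k hi
      rcases hν' i k hi with ⟨-, hk, h, e⟩ | ⟨-, hk, h, e⟩
      · simp only [e, max_eq_left hk.le, pm i k h]
      · simp only [e, max_eq_right hk, qm i k h]
    · intro i k
      by_cases h : T i
      · simpa [v', h] using ((M.anti i k).antitone (le_max_left _ _)).trans (pb i k)
      · simpa [v', h] using ((M.anti i k).antitone (le_max_right _ _)).trans (qb i k)
    · intro i hi
      by_cases h : T i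
      · simp only [ν', h, if_true] at hi
        simpa [v', h] using pn i hi
      · simp only [ν', h, if_false] at hi
        simpa [v', h] using qn i hi
    · intro k hk
      have hkS : p k ≤ q k := by
        by_contra! hlt
        obtain ⟨i, hi⟩ := hsold k hlt
        have h : T i := ⟨k, hlt, hi⟩
        exact hk i (by simpa [ν', h] using hi)
      refine (max_eq_right hkS).trans ?_
      refine qu k fun i hi => ?_
      by_cases h : T i
      · obtain ⟨l, hl, hil⟩ := h
        obtain ⟨m, hm, him⟩ := hp.exists_match_of_lt hq' hil hl
        obtain rfl : m = k := Option.some_injective _ (him.symm.trans hi)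
        exact absurd hkS hm.not_ge
      · exact hk i (by simpa [ν', h] using hi)
  exact (le_max_left _ _).trans (hq.2 _ _ _ key j)

end Comparison

section RemoveBuyer

variable {I J : Type} [Fintype I] [Fintype J] [DecidableEq I] {M : Market I J} {i₀ : I}
  {p q r : J → ℝ} {w : I → ℝ} {μ : I → Option J}

/-- Removing a buyer leaves an equilibrium in which that buyer's good has its price as
reserve. -/
theorem IsEquilib.removeBuyer (h : IsEquilib M p w μ) :
    IsReserveEquilib (M.removeBuyer i₀) (fun j => if μ i₀ = some j then p j else 0) p
      (fun i => w i.1) (fun i => μ i.1) := by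
  obtain ⟨hinj, h0, hw, hm, hb, hn, hu⟩ := h
  refine ⟨fun i i' j hi hi' => Subtype.ext (hinj i i' j hi hi'), fun j => ?_, fun i => hw i,
    fun i j => hm i j, fun i j => hb i j, fun i => hn i, fun j hj => ?_⟩
  · dsimp only
    split_ifs
    · exact le_rfl
    · exact h0 j
  · dsimp only
    split_ifs with h
    · rfl
    · refine hu j fun i hi => ?_
      by_cases hi₀ : i = i₀
      · exact h (hi₀ ▸ hi)
      · exact hj ⟨i, hi₀⟩ hi

/-- Selling the only unsold good with positive price to the removed buyer gives an equilibrium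
of the whole market. -/
theorem IsReserveEquilib.isEquilib_insert {v : {i // i ≠ i₀} → ℝ} {ν : {i // i ≠ i₀} → Option J}
    (h : IsReserveEquilib (M.removeBuyer i₀) r q v ν) (hr : ∀ j, 0 ≤ r j) {k : J} {t : ℝ}
    (ht : 0 ≤ t) (hkt : t = M.u i₀ k (q k)) (hle : ∀ j, M.u i₀ j (q j) ≤ t)
    (hk : ∀ i, ν i ≠ some k) (huniq : ∀ j, (∀ i, ν i ≠ some j) → j ≠ k → q j = 0) :
    IsEquilib M q (fun i => if h : i = i₀ then t else v ⟨i, h⟩)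
      (fun i => if h : i = i₀ then some k else ν ⟨i, h⟩) := by
  obtain ⟨hinj, h0, hw, hm, hb, hn, -⟩ := h
  refine ⟨?_, fun j => (hr j).trans (h0 j), ?_, ?_, ?_, ?_, ?_⟩
  · intro i i' j hi hi'
    by_cases e : i = i₀ <;> by_cases e' : i' = i₀
    · rw [e, e']
    · simp only [e, e', dite_true, dite_false, Option.some.injEq] at hi hi'
      exact absurd (hi ▸ hi') (hk _)
    · simp only [e, e', dite_true, dite_false, Option.some.injEq] at hi hi'
      exact absurd (hi' ▸ hi) (hk _)
    · simp only [e, e', dite_false] at hi hi'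
      exact congrArg Subtype.val (hinj _ _ j hi hi')
  · intro i
    by_cases e : i = i₀
    · simpa [e] using ht
    · simpa [e] using hw ⟨i, e⟩
  · intro i j hi
    by_cases e : i = i₀
    · subst e
      simp only [dite_true, Option.some.injEq] at hi ⊢
      rw [← hi, hkt]
    · simp only [e, dite_false] at hi ⊢
      exact hm ⟨i, e⟩ j hi
  · intro i j
    by_cases e : i = i₀
    · subst e
      simpa using hle j
    · simpa [e, Market.removeBuyer] using hb ⟨i, e⟩ j
  · intro i hi
    by_cases e : i = i₀
    · simp [e] at hi
    · simp only [e, dite_false] at hi ⊢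
      exact hn ⟨i, e⟩ hi
  · intro j hj
    refine huniq j (fun i hi => hj i.1 ?_) (fun e => hj i₀ (by simp [e]))
    simpa [i.2] using hi

/-- The good bought by `i₀` at the lowest equilibrium is at least as expensive at the highest
equilibrium without `i₀`. -/
theorem IsLowest.le_of_match (hlow : IsLowest M p w μ) {v : {i // i ≠ i₀} → ℝ}
    {ν : {i // i ≠ i₀} → Option J} (hhigh : IsHighest (M.removeBuyer i₀) q v ν) {j₀ : J}
    (hj₀ : μ i₀ = some j₀) : p j₀ ≤ q j₀ := by
  by_contra! hlt
  obtain ⟨-, hp0, hw, hm, hb, -, hu⟩ := id hlow.1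
  set x₀ := (q j₀ + p j₀) / 2 with hx₀
  set t := M.u i₀ j₀ x₀ with ht
  have hwt : w i₀ < t := by
    rw [hm i₀ j₀ hj₀]
    exact M.anti i₀ j₀ (by linarith)
  choose x hx using fun j => M.surj i₀ j t
  obtain ⟨q', v', ν', hq'⟩ := (M.removeBuyer i₀).exists_reserveEquilib fun j => max 0 (x j)
  have hxq : ∀ j, x j ≤ q' j := fun j => (le_max_right _ _).trans (hq'.2.1 j)
  have hq0 : ∀ j, 0 ≤ q' j := fun j => (le_max_left _ _).trans (hq'.2.1 j)
  have hres := hlow.1.removeBuyer (i₀ := i₀)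
  have hsold : ∀ j, q' j < p j → j ≠ j₀ → ∃ i : {i // i ≠ i₀}, μ i.1 = some j := by
    intro j hj hne
    by_contra! hcon
    have hpj : p j = 0 := by
      refine hu j fun i hi => ?_
      by_cases e : i = i₀
      · subst e
        exact hne (Option.some_injective _ (hi.symm.trans hj₀))
      · exact hcon ⟨i, e⟩ hi
    linarith [hq0 j]
  have hunsold : ∀ j, (∀ i, ν' i ≠ some j) → q' j ≠ 0 → q' j = x j ∧ q' j < p j := by
    intro j hj hne
    have h1 : q' j = max 0 (x j) := hq'.2.2.2.2.2.2 j hj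
    have h2 : q' j = x j := by
      rcases max_choice 0 (x j) with h | h
      · exact absurd (h1.trans h) hne
      · exact h1.trans h
    refine ⟨h2, h2 ▸ (M.anti i₀ j).lt_iff_gt.1 ?_⟩
    rw [hx j]
    exact (hb i₀ j).trans_lt hwt
  by_cases hall : ∀ j, (∀ i, ν' i ≠ some j) → q' j = 0
  · have heq : IsEquilib (M.removeBuyer i₀) q' v' ν' :=
      ⟨hq'.1, hq0, hq'.2.2.1, hq'.2.2.2.1, hq'.2.2.2.2.1, hq'.2.2.2.2.2.1, hall⟩
    have h1 := hhigh.2 _ _ _ heq j₀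
    have h2 : x j₀ = x₀ := (M.anti i₀ j₀).injective (hx j₀)
    linarith [hxq j₀]
  · push Not at hall
    obtain ⟨k, hk, hk0⟩ := hall
    obtain ⟨hkx, hkp⟩ := hunsold k hk hk0
    have heq := hq'.isEquilib_insert (fun j => le_max_left _ _) (k := k) (t := t)
      ((hw i₀).trans hwt.le) (by rw [hkx, hx k])
      (fun j => hx j ▸ (M.anti i₀ j).antitone (hxq j)) hk (by
        intro j hj hne
        by_contra h0
        exact hne (hres.unsold_unique hq' hsold hkp (hunsold j hj h0).2 hk hj))
    exact absurd (hlow.2 _ _ _ heq k) hkp.not_ge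

end RemoveBuyer

/-- Price monotonicity under buyer removal: the price of any good `j` at the
lowest equilibrium of `M` is at most its price at the highest equilibrium of
`M` without buyer `i0`, with equality when `i0` is matched to `j` at the
lowest equilibrium of `M`. -/
theorem price_le_removeBuyer {I J : Type} [Fintype I] [Fintype J] [DecidableEq I]
    (M : Market I J) (i0 : I)
    (p : J → ℝ) (w : I → ℝ) (μ : I → Option J) (hlow : IsLowest M p w μ)
    (pb : J → ℝ) (wb : {i : I // i ≠ i0} → ℝ) (μb : {i : I // i ≠ i0} → Option J)
    (hhigh : IsHighest (M.removeBuyer i0) pb wb μb) (j : J) :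
    p j ≤ pb j ∧ (μ i0 = some j → p j = pb j) := by
  have hres := hlow.1.removeBuyer (i₀ := i0)
  have hle : p j ≤ pb j := by
    refine hhigh.le_of_sold hres (fun k hk => ?_) j
    by_contra! hcon
    have hpk : p k = 0 := by
      refine hlow.1.2.2.2.2.2.2 k fun i hi => ?_
      by_cases e : i = i0
      · subst e
        exact absurd (hlow.le_of_match hhigh hi) hk.not_ge
      · exact hcon ⟨i, e⟩ hi
    linarith [hhigh.1.2.1 k]
  refine ⟨hle, fun hj => hle.antisymm ?_⟩
  by_contra! hlt
  have hb : IsReserveEquilib (M.removeBuyer i0) (fun _ => 0) pb wb μb := hhigh.1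
  obtain ⟨-, -, i, -, hi⟩ := hb.exists_common_buyer hres (fun k hk => by
    by_contra! hcon
    linarith [hb.2.2.2.2.2.2 k hcon, hlow.1.2.1 k]) hlt
  exact i.2 (hlow.1.1 _ _ j hi hj)
end
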